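/- Let (A, m) be a noetherian local ring with infinite residue field, M a finitely generated A-module of Krull dimension d > 0, J an m-primary ideal, and I_1, ..., I_s ideals of A with I = I_1···I_s satisfying ht((I + Ann_A M)/Ann_A M) > 0. Let R = {x_1, ..., x_d} ⊂ J be a joint reduction of (I_1, ..., I_s, J) with respect to M of the type (0, ..., 0, d) which is a system of parameters for M. Then e_A(J^{[d]}, I_1^{[0]}, ..., I_s^{[0]}, M) = e_A(J, M) = e_A(R, M). -/

import Mathlib

open IsLocalRing

section MixedMultDefs

variable (A : Type*) [CommRing A]

/-- The length of an `A`-module `M`, defined as the height of `⊤` in the lattice of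
submodules of `M` (i.e. the supremum of lengths of chains of submodules). -/
noncomputable def modLength (M : Type*) [AddCommGroup M] [Module A M] : ℕ∞ :=
  Order.height (⊤ : Submodule A M)

/-- The length of a module as a natural number (`0` if the length is infinite). -/
noncomputable def lenNat (M : Type*) [AddCommGroup M] [Module A M] : ℕ :=
  (modLength A M).toNat

/-- The height of an ideal: the infimum of the heights of the prime ideals containing it. -/
noncomputable def idealHeight (I : Ideal A) : ℕ∞ :=
  ⨅ (p : PrimeSpectrum A) (_ : I ≤ p.asIdeal), Order.height p

/-- The Krull dimension of a module `M`, i.e. the Krull dimension of `A / Ann_A M`. -/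
noncomputable def modDim (M : Type*) [AddCommGroup M] [Module A M] : WithBot ℕ∞ :=
  ringKrullDim (A ⧸ Module.annihilator A M)

/-- `x` is a Rees superficial element of the family of ideals `I = (I 0, …, I (t-1))` with
respect to `M`, as an element of the ideal `I i`:  `x ∈ I i` and
`xM ∩ I_1^{n_1} ⋯ I_i^{n_i + 1} ⋯ I_t^{n_t} M = x I_1^{n_1} ⋯ I_i^{n_i} ⋯ I_t^{n_t} M`
for all sufficiently large `n i` and arbitrary other exponents. -/
def IsReesSuperficial (M : Type*) [AddCommGroup M] [Module A M] {t : ℕ}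
    (I : Fin t → Ideal A) (i : Fin t) (x : A) : Prop :=
  x ∈ I i ∧ ∃ N : ℕ, ∀ n : Fin t → ℕ, N ≤ n i →
    (Ideal.span {x} • (⊤ : Submodule A M)) ⊓
        ((∏ j, I j ^ (n j + if j = i then 1 else 0)) • (⊤ : Submodule A M)) =
      Ideal.span {x} • ((∏ j, I j ^ (n j)) • (⊤ : Submodule A M))

/-- `x 0, …, x (t-1)` is a Rees superficial sequence of the family `I` with respect to `M`,
where the assignment `c` records to which ideal each element of the sequence belongs:
`x i` is a Rees superficial element of `I`, as an element of `I (c i)`, with respect to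
`M / (x 0, …, x (i-1)) M`. -/
def IsReesSuperficialSeq (M : Type*) [AddCommGroup M] [Module A M] {t s : ℕ}
    (I : Fin s → Ideal A) (x : Fin t → A) (c : Fin t → Fin s) : Prop :=
  ∀ i : Fin t,
    IsReesSuperficial A
      (M ⧸ ((Ideal.span (x '' {j | (j : ℕ) < (i : ℕ)})) • (⊤ : Submodule A M)))
      I (c i) (x i)

/-- The assignment `c` has type `(k 0, …, k (s-1))`: for each `i`, exactly `k i` members of
the sequence are assigned to the ideal indexed by `i`. -/
def OfTypeCount {t s : ℕ} (c : Fin t → Fin s) (k : Fin s → ℕ) : Prop :=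
  ∀ i : Fin s, (Finset.univ.filter fun j => c j = i).card = k i

/-- The ideal generated by the members of the sequence `x` assigned (by `c`) to index `i`. -/
def jrIdeal {t s : ℕ} (x : Fin t → A) (c : Fin t → Fin s) (i : Fin s) : Ideal A :=
  Ideal.span (x '' {j | c j = i})

/-- The defining equation of a joint reduction:  all members of the sequence lie in their
assigned ideals, and `I_1^{n_1+1} ⋯ I_s^{n_s+1} M = Σ_i (𝔍_i) I_1^{n_1+1} ⋯ I_i^{n_i} ⋯
I_s^{n_s+1} M` for all sufficiently large `n_1, …, n_s`, where `𝔍_i` consists of the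
members of the sequence assigned to `I i`. -/
def IsJointReductionEq (M : Type*) [AddCommGroup M] [Module A M] {t s : ℕ}
    (I : Fin s → Ideal A) (x : Fin t → A) (c : Fin t → Fin s) : Prop :=
  (∀ j, x j ∈ I (c j)) ∧
  ∃ N : ℕ, ∀ n : Fin s → ℕ, (∀ i, N ≤ n i) →
    ((∏ i, I i ^ (n i + 1)) • (⊤ : Submodule A M)) =
      ∑ i : Fin s, jrIdeal A x c i •
        ((∏ j, I j ^ (n j + if j = i then 0 else 1)) • (⊤ : Submodule A M))

/-- A joint reduction of the family `I` with respect to `M` of type `k`. -/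
def IsJointReduction (M : Type*) [AddCommGroup M] [Module A M] {t s : ℕ}
    (I : Fin s → Ideal A) (x : Fin t → A) (c : Fin t → Fin s) (k : Fin s → ℕ) : Prop :=
  IsJointReductionEq A M I x c ∧ OfTypeCount c k

/-- `x 1, …, x d` is a system of parameters for `M`:  `d = dim M`, the `x j` lie in the
maximal ideal, and `M / (x 1, …, x d) M` has finite length. -/
def IsSOP [IsLocalRing A] (M : Type*) [AddCommGroup M] [Module A M] {d : ℕ}
    (x : Fin d → A) : Prop :=
  modDim A M = (d : ℕ∞) ∧ (∀ j, x j ∈ maximalIdeal A) ∧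
    IsFiniteLength A (M ⧸ ((Ideal.span (Set.range x)) • (⊤ : Submodule A M)))

/-- `e` is the Hilbert–Samuel multiplicity of the ideal `q` on the `d`-dimensional module
`M`: the function `n ↦ ℓ_A(M / q^n M)` is eventually given by a polynomial of degree at
most `d` with `n^d`-coefficient `e / d!`. -/
def IsHSMult (M : Type*) [AddCommGroup M] [Module A M] (q : Ideal A) (d : ℕ) (e : ℕ) :
    Prop :=
  ∃ P : Polynomial ℚ, P.natDegree ≤ d ∧
    (∃ N : ℕ, ∀ n : ℕ, N ≤ n →
      IsFiniteLength A (M ⧸ (q ^ n • (⊤ : Submodule A M))) ∧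
      (lenNat A (M ⧸ (q ^ n • (⊤ : Submodule A M))) : ℚ) = P.eval (n : ℚ)) ∧
    (e : ℚ) = P.coeff d * (Nat.factorial d : ℚ)

/-- The subquotient `J^{n_0} I_1^{n_1} ⋯ I_s^{n_s} M / J^{n_0+1} I_1^{n_1} ⋯ I_s^{n_s} M`. -/
abbrev mixedSub (M : Type*) [AddCommGroup M] [Module A M] {s : ℕ} (J : Ideal A)
    (I : Fin s → Ideal A) (n : Fin (s + 1) → ℕ) : Submodule A M :=
  (J ^ (n 0) * ∏ i : Fin s, I i ^ (n i.succ)) • (⊤ : Submodule A M)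

/-- continued -/
abbrev mixedPiece (M : Type*) [AddCommGroup M] [Module A M] {s : ℕ} (J : Ideal A)
    (I : Fin s → Ideal A) (n : Fin (s + 1) → ℕ) :=
  ↥(mixedSub A M J I n) ⧸
    (Submodule.comap (mixedSub A M J I n).subtype
      ((J ^ (n 0 + 1) * ∏ i : Fin s, I i ^ (n i.succ)) • (⊤ : Submodule A M)))

/-- `e` is the mixed multiplicity `e_A(J^{[k_0+1]}, I_1^{[k_1]}, …, I_s^{[k_s]}; M)`:
the function `(n_0, …, n_s) ↦ ℓ_A(J^{n_0} I_1^{n_1} ⋯ I_s^{n_s} M / J^{n_0+1} I_1^{n_1}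
⋯ I_s^{n_s} M)` is, for all sufficiently large `n_0, …, n_s`, given by a polynomial of
total degree at most `k_0 + k_1 + ⋯ + k_s` whose coefficient of
`n_0^{k_0} n_1^{k_1} ⋯ n_s^{k_s}` is `e / (k_0! k_1! ⋯ k_s!)`. -/
def IsMixedMult (M : Type*) [AddCommGroup M] [Module A M] {s : ℕ} (J : Ideal A)
    (I : Fin s → Ideal A) (k0 : ℕ) (k : Fin s → ℕ) (e : ℕ) : Prop :=
  ∃ P : MvPolynomial (Fin (s + 1)) ℚ, P.totalDegree ≤ k0 + ∑ i, k i ∧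
    (∃ N : ℕ, ∀ n : Fin (s + 1) → ℕ, (∀ i, N ≤ n i) →
      IsFiniteLength A (mixedPiece A M J I n) ∧
      (lenNat A (mixedPiece A M J I n) : ℚ) =
        MvPolynomial.eval (fun i => (n i : ℚ)) P) ∧
    (e : ℚ) = MvPolynomial.coeff (Finsupp.equivFunOnFinite.symm (Fin.cons k0 k)) P *
      ((Nat.factorial k0 * ∏ i, Nat.factorial (k i) : ℕ) : ℚ)

/-- `e` is the mixed multiplicity `e_A(I_1^{[k_1]}, …, I_s^{[k_s]}; M)` of a family of
`m`-primary ideals: the function `(n_1, …, n_s) ↦ ℓ_A(M / I_1^{n_1} ⋯ I_s^{n_s} M)` is, for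
all sufficiently large `n_1, …, n_s`, given by a polynomial of total degree at most
`k_1 + ⋯ + k_s` whose coefficient of `n_1^{k_1} ⋯ n_s^{k_s}` is `e / (k_1! ⋯ k_s!)`. -/
def IsMixedMultPrimary (M : Type*) [AddCommGroup M] [Module A M] {s : ℕ}
    (I : Fin s → Ideal A) (k : Fin s → ℕ) (e : ℕ) : Prop :=
  ∃ P : MvPolynomial (Fin s) ℚ, P.totalDegree ≤ ∑ i, k i ∧
    (∃ N : ℕ, ∀ n : Fin s → ℕ, (∀ i, N ≤ n i) →
      IsFiniteLength A (M ⧸ ((∏ i, I i ^ (n i)) • (⊤ : Submodule A M))) ∧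
      (lenNat A (M ⧸ ((∏ i, I i ^ (n i)) • (⊤ : Submodule A M))) : ℚ) =
        MvPolynomial.eval (fun i => (n i : ℚ)) P) ∧
    (e : ℚ) = MvPolynomial.coeff (Finsupp.equivFunOnFinite.symm k) P *
      ((∏ i, Nat.factorial (k i) : ℕ) : ℚ)

/-- The submodule `(0_M : I^∞) = ⋃_n (0_M : I^n)` of `M`. -/
def satSub (M : Type*) [AddCommGroup M] [Module A M] (I : Ideal A) : Submodule A M :=
  ⨆ n : ℕ, Submodule.torsionBySet A M ((I ^ n : Ideal A) : Set A)

/-- A polynomial function on an `A`-module `V` with values in the residue field of `A`: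
an element of the subalgebra of functions generated by the linear ones. -/
def IsPolyFun [IsLocalRing A] (V : Type*) [AddCommGroup V] [Module A V]
    (f : V → ResidueField A) : Prop :=
  f ∈ Algebra.adjoin A {g : V → ResidueField A | ∃ l : V →ₗ[A] ResidueField A, g = ⇑l}

/-- A Zariski open subset of an `A`-module `V` (for `V` a finite-dimensional vector space
over the residue field, this is the usual Zariski topology): the complement of the common
zero locus of a set of polynomial functions. -/
def IsZariskiOpen [IsLocalRing A] (V : Type*) [AddCommGroup V] [Module A V]
    (U : Set V) : Prop :=
  ∃ S : Set (V → ResidueField A), (∀ f ∈ S, IsPolyFun A V f) ∧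
    U = {v | ∃ f ∈ S, f v ≠ 0}

end MixedMultDefs

/-!
Let `Q = (R)` and `X = I₁ ^ N ⋯ I_s ^ N M` for a large `N`. The subquotients
`J ^ n X / J ^ (n + 1) X` are those which define the mixed multiplicity `e₁`, so summing their
lengths shows that `ℓ (X / J ^ n X)` grows like `e₁ n ^ d / d!`. By Artin–Rees,
`ℓ (X / J ^ n X) ≤ ℓ (M / J ^ (n + c) M)`, and `Q ⊆ J` gives
`ℓ (M / J ^ n M) ≤ ℓ (M / Q ^ n M)`, so that `e₁ ≤ e₂ ≤ e₃` for the multiplicities `e₂` of `J`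
and `e₃` of `Q`. Conversely, the joint reduction gives
`J ^ (n + N) X = Q ^ n J ^ N X ⊆ Q ^ n M`, and `dim M / X < d` by the height condition, whence
`ℓ (M / Q ^ n M) ≤ ℓ (X / J ^ (n + N) X) + O(n ^ (d - 1))` and `e₃ ≤ e₁`.
-/

section RelativeLength

open scoped Pointwise

variable {A M : Type*} [CommRing A] [AddCommGroup M] [Module A M]

/-- The length of `(U + V) / V`, encoded as the length of `U / (U ∩ V)`, so that no inclusion
between the submodules `U` and `V` is required. -/
noncomputable def relLength (U V : Submodule A M) : ℕ∞ :=
  Module.length A (U ⧸ V.submoduleOf U)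

theorem relLength_anti_right {U V V' : Submodule A M} (h : U ⊓ V ≤ V') :
    relLength U V' ≤ relLength U V :=
  have h' : V.submoduleOf U ≤ V'.submoduleOf U := fun u hu => h ⟨u.2, hu⟩
  Module.length_le_of_surjective (Submodule.factor h') (Submodule.factor_surjective h')

theorem relLength_eq_add {T U V : Submodule A M} (hUT : U ≤ T) :
    relLength T V = relLength U V + relLength T (U ⊔ V) := by
  have hincl : V.submoduleOf U = (V.submoduleOf T).comap (Submodule.inclusion hUT) := rfl
  have hsup : V.submoduleOf T ≤ (U ⊔ V).submoduleOf T := Submodule.comap_mono le_sup_right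
  refine Module.length_eq_add_of_exact
    ((V.submoduleOf U).mapQ (V.submoduleOf T) (Submodule.inclusion hUT) hincl.le)
    (Submodule.factor hsup) ?_ (Submodule.factor_surjective hsup) fun z => ?_
  · rw [← LinearMap.ker_eq_bot, Submodule.ker_mapQ, ← hincl]
    exact Submodule.mkQ_map_self _
  obtain ⟨t, rfl⟩ := Submodule.mkQ_surjective _ z
  have hfactor : Submodule.factor hsup (Submodule.mkQ _ t) = 0 ↔ (t : M) ∈ U ⊔ V :=
    Submodule.Quotient.mk_eq_zero _
  rw [hfactor, Submodule.mem_sup]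
  constructor
  · rintro ⟨u, hu, v, hv, huv⟩
    have hmem : u - t ∈ V := by simpa [← huv] using hv
    exact ⟨Submodule.mkQ _ ⟨u, hu⟩, (Submodule.Quotient.eq _).2 hmem⟩
  · rintro ⟨y, hy⟩
    obtain ⟨u, rfl⟩ := Submodule.mkQ_surjective _ y
    have hmem : (t : M) - u ∈ V := (Submodule.Quotient.eq (V.submoduleOf T)).1 hy.symm
    exact ⟨u, u.2, t - u, hmem, add_sub_cancel _ _⟩

theorem relLength_top (V : Submodule A M) : relLength ⊤ V = Module.length A (M ⧸ V) :=
  (Submodule.Quotient.equiv (V.submoduleOf ⊤) V Submodule.topEquiv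
    (Submodule.map_comap_eq_of_surjective Submodule.topEquiv.surjective V)).length_eq

theorem length_quotient_anti {V V' : Submodule A M} (h : V ≤ V') :
    Module.length A (M ⧸ V') ≤ Module.length A (M ⧸ V) :=
  Module.length_le_of_surjective (Submodule.factor h) (Submodule.factor_surjective h)

theorem length_quotient_eq_relLength_add (U V : Submodule A M) :
    Module.length A (M ⧸ V) = relLength U V + Module.length A (M ⧸ (U ⊔ V)) := by
  simpa only [relLength_top] using relLength_eq_add (V := V) (le_top : U ≤ ⊤)

theorem relLength_smul_top_le {V V' : Submodule A M} (a : A) (h : a • V' ≤ V) :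
    relLength (a • (⊤ : Submodule A M)) V ≤ Module.length A (M ⧸ V') := by
  let g : M →ₗ[A] ↥(a • (⊤ : Submodule A M)) :=
    (LinearMap.lsmul A M a).codRestrict _ fun x =>
      Submodule.smul_mem_pointwise_smul x a ⊤ Submodule.mem_top
  have hg : V' ≤ (V.submoduleOf _).comap g := fun x hx =>
    h (Submodule.smul_mem_pointwise_smul x a V' hx)
  refine Module.length_le_of_surjective (V'.mapQ _ g hg) fun z => ?_
  obtain ⟨⟨_, x, -, rfl⟩, rfl⟩ := Submodule.mkQ_surjective _ z
  exact ⟨V'.mkQ x, rfl⟩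

theorem length_quotient_sup_mul_smul_top_le (V : Submodule A M) (a b : A) :
    Module.length A (M ⧸ (V ⊔ (a * b) • (⊤ : Submodule A M))) ≤
      Module.length A (M ⧸ (V ⊔ b • (⊤ : Submodule A M))) +
        Module.length A (M ⧸ (V ⊔ a • (⊤ : Submodule A M))) := by
  rw [length_quotient_eq_relLength_add (a • (⊤ : Submodule A M))]
  refine add_le_add (relLength_smul_top_le a ?_) (length_quotient_anti ?_)
  · rw [Submodule.smul_sup', smul_smul]
    exact sup_le_sup_right (Submodule.smul_le_self_of_tower a V) _
  · rw [sup_comm V]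
    exact sup_le_sup_left le_sup_left _

theorem length_quotient_sup_pow_smul_top_le (V : Submodule A M) (a : A) (k : ℕ) :
    Module.length A (M ⧸ (V ⊔ a ^ k • (⊤ : Submodule A M))) ≤
      k * Module.length A (M ⧸ (V ⊔ a • (⊤ : Submodule A M))) := by
  induction k with
  | zero =>
    have : Subsingleton (M ⧸ (V ⊔ a ^ 0 • (⊤ : Submodule A M))) :=
      Submodule.Quotient.subsingleton_iff.2 (by simp)
    simp [Module.length_eq_zero]
  | succ k ih =>
    rw [pow_succ, Nat.cast_succ, add_one_mul, add_comm]
    exact (length_quotient_sup_mul_smul_top_le V (a ^ k) a).trans (add_le_add_right ih _)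

theorem length_quotient_quotient_smul_top (V : Submodule A M) (I : Ideal A) :
    Module.length A ((M ⧸ V) ⧸ (I • (⊤ : Submodule A (M ⧸ V)))) =
      Module.length A (M ⧸ (V ⊔ I • (⊤ : Submodule A M))) := by
  have hmap : I • (⊤ : Submodule A (M ⧸ V)) = (I • (⊤ : Submodule A M)).map V.mkQ := by
    rw [Submodule.map_smul'', Submodule.map_top, Submodule.range_mkQ]
  rw [hmap]
  exact (Submodule.quotientQuotientEquivQuotientSup V (I • ⊤)).length_eq

end RelativeLength

section Growth

open scoped Pointwise

variable {A M : Type*} [CommRing A] [AddCommGroup M] [Module A M]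

theorem exists_mem_supportDim_quotSMulTop_add_one_le [IsNoetherianRing A] [Module.Finite A M]
    {I : Ideal A} (hI : ∀ p ∈ (Module.annihilator A M).minimalPrimes, ¬ I ≤ p) :
    ∃ z ∈ I, Module.supportDim A (QuotSMulTop z M) + 1 ≤ Module.supportDim A M := by
  have hfin := Ideal.finite_minimalPrimes_of_isNoetherianRing A (Module.annihilator A M)
  have havoid : ¬ (I : Set A) ⊆ ⋃ p ∈ (Module.annihilator A M).minimalPrimes, (p : Set A) := by
    rw [Ideal.subset_union_prime_finite hfin ⊤ ⊤ fun p hp _ _ => hp.1.1]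
    push Not
    exact hI
  obtain ⟨z, hzI, hz⟩ := Set.not_subset.1 havoid
  exact ⟨z, hzI, Module.supportDim_quotSMulTop_succ_le_of_notMem_minimalPrimes fun p hp hzp =>
    hz (Set.mem_biUnion hp hzp)⟩

theorem isFiniteLength_of_maximalIdeal_mem_minimalPrimes_annihilator [IsNoetherianRing A]
    [IsLocalRing A] [Module.Finite A M]
    (h : maximalIdeal A ∈ (Module.annihilator A M).minimalPrimes) : IsFiniteLength A M := by
  have := IsLocalRing.quotient_artinian_of_mem_minimalPrimes_of_isLocalRing _ h
  let _ := Module.quotientAnnihilator (R := A) (M := M)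
  have : IsScalarTower A (A ⧸ Module.annihilator A M) M := .of_algebraMap_smul fun _ _ => rfl
  have := Module.Finite.of_restrictScalars_finite A (A ⧸ Module.annihilator A M) M
  have : IsArtinian A M :=
    isArtinian_of_surjective_algebraMap (R := A ⧸ Module.annihilator A M)
      Ideal.Quotient.mk_surjective
  exact isFiniteLength_iff_isNoetherian_isArtinian.2 ⟨inferInstance, this⟩

theorem isFiniteLength_or_exists_supportDim_quotSMulTop_add_one_le [IsNoetherianRing A]
    [IsLocalRing A] [Module.Finite A M] :
    IsFiniteLength A M ∨ ∃ z ∈ maximalIdeal A,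
      Module.supportDim A (QuotSMulTop z M) + 1 ≤ Module.supportDim A M := by
  by_cases hmin : maximalIdeal A ∈ (Module.annihilator A M).minimalPrimes
  · exact .inl (isFiniteLength_of_maximalIdeal_mem_minimalPrimes_annihilator hmin)
  · refine .inr (exists_mem_supportDim_quotSMulTop_add_one_le fun p hp hle => hmin ?_)
    rwa [hle.antisymm (IsLocalRing.le_maximalIdeal hp.1.1.ne_top)]

theorem exists_maximalIdeal_pow_smul_top_eq_bot [IsLocalRing A] (h : IsFiniteLength A M) :
    ∃ k, maximalIdeal A ^ k • (⊤ : Submodule A M) = ⊥ := by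
  obtain ⟨_, _⟩ := isFiniteLength_iff_isNoetherian_isArtinian.1 h
  obtain ⟨k, hk⟩ := IsArtinian.monotone_stabilizes
    ⟨fun k => OrderDual.toDual (maximalIdeal A ^ k • (⊤ : Submodule A M)),
      fun _ _ hij => Submodule.smul_mono_left (Ideal.pow_le_pow_right hij)⟩
  have hstable : maximalIdeal A ^ k • (⊤ : Submodule A M) = maximalIdeal A ^ (k + 1) • ⊤ :=
    hk (k + 1) k.le_succ
  refine ⟨k, Submodule.eq_bot_of_le_smul_of_le_jacobson_bot (maximalIdeal A) _
    (IsNoetherian.noetherian _) ?_ (IsLocalRing.maximalIdeal_le_jacobson _)⟩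
  rw [← Submodule.mul_smul, ← pow_succ', ← hstable]

theorem exists_maximalIdeal_pow_smul_top_le [IsLocalRing A] {V : Submodule A M}
    (h : IsFiniteLength A (M ⧸ V)) : ∃ k, maximalIdeal A ^ k • (⊤ : Submodule A M) ≤ V := by
  obtain ⟨k, hk⟩ := exists_maximalIdeal_pow_smul_top_eq_bot h
  refine ⟨k, ?_⟩
  rwa [← Submodule.range_mkQ V, ← Submodule.map_top, ← Submodule.map_smul'',
    ← LinearMap.le_ker_iff_map, Submodule.ker_mkQ] at hk

theorem pow_smul_top_le_pow_smul_top {I Q : Ideal A}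
    (h : I • (⊤ : Submodule A M) ≤ Q • ⊤) (n : ℕ) :
    I ^ n • (⊤ : Submodule A M) ≤ Q ^ n • ⊤ := by
  induction n with
  | zero => simp only [pow_zero, le_refl]
  | succ n ih =>
    calc I ^ (n + 1) • (⊤ : Submodule A M) = I • I ^ n • ⊤ := by rw [pow_succ', Submodule.mul_smul]
      _ ≤ I • Q ^ n • ⊤ := Submodule.smul_mono le_rfl ih
      _ = Q ^ n • I • ⊤ := by rw [← Submodule.mul_smul, mul_comm, Submodule.mul_smul]
      _ ≤ Q ^ n • Q • ⊤ := Submodule.smul_mono le_rfl h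
      _ = Q ^ (n + 1) • ⊤ := by rw [pow_succ, Submodule.mul_smul]

-- Some `z ^ k` kills `M ⧸ Q M`, so `z ^ (k * n)` kills `M ⧸ Q ^ n M`, which is then filtered by
-- `k * n` quotients of `M ⧸ (Q ^ n M + z M)`.
theorem exists_length_quotient_pow_smul_top_le_mul [IsLocalRing A] {Q : Ideal A} {z : A}
    (hQ : IsFiniteLength A (M ⧸ (Q • ⊤ : Submodule A M))) (hz : z ∈ maximalIdeal A) :
    ∃ k : ℕ, ∀ n : ℕ, Module.length A (M ⧸ (Q ^ n • ⊤ : Submodule A M)) ≤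
      (k * n : ℕ) * Module.length A
        (QuotSMulTop z M ⧸ (Q ^ n • ⊤ : Submodule A (QuotSMulTop z M))) := by
  obtain ⟨k, hk⟩ := exists_maximalIdeal_pow_smul_top_le hQ
  refine ⟨k, fun n => ?_⟩
  have hspan : Ideal.span {z ^ k} • (⊤ : Submodule A M) ≤ Q • ⊤ :=
    (Submodule.smul_mono_left
      ((Ideal.span_singleton_le_iff_mem _).2 (Ideal.pow_mem_pow hz k))).trans hk
  have hzn : z ^ (k * n) • (⊤ : Submodule A M) ≤ Q ^ n • ⊤ := by
    rw [pow_mul, ← Submodule.ideal_span_singleton_smul, ← Ideal.span_singleton_pow]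
    exact pow_smul_top_le_pow_smul_top hspan n
  rw [length_quotient_quotient_smul_top, sup_comm]
  calc Module.length A (M ⧸ (Q ^ n • ⊤ : Submodule A M))
      = Module.length A (M ⧸ (Q ^ n • ⊤ ⊔ z ^ (k * n) • ⊤ : Submodule A M)) := by
        rw [sup_eq_left.2 hzn]
    _ ≤ _ := length_quotient_sup_pow_smul_top_le _ z (k * n)

theorem exists_length_quotient_pow_smul_top_le [IsNoetherianRing A] [IsLocalRing A]
    (Q : Ideal A) (r : ℕ) (N : Type*) [AddCommGroup N] [Module A N] [Module.Finite A N]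
    (hdim : Module.supportDim A N ≤ r)
    (hQ : IsFiniteLength A (N ⧸ (Q • ⊤ : Submodule A N))) :
    ∃ c : ℕ, ∀ n : ℕ,
      Module.length A (N ⧸ (Q ^ n • ⊤ : Submodule A N)) ≤ (c * n ^ r : ℕ) := by
  obtain hN | ⟨z, hz, hdrop⟩ :=
    isFiniteLength_or_exists_supportDim_quotSMulTop_add_one_le (A := A) (M := N)
  · obtain ⟨c, hc⟩ := ENat.ne_top_iff_exists.1 (Module.length_ne_top_iff.2 hN)
    refine ⟨c, fun n => ?_⟩
    rcases n.eq_zero_or_pos with rfl | hn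
    · simp
    calc Module.length A (N ⧸ (Q ^ n • ⊤ : Submodule A N)) ≤ Module.length A N :=
          Module.length_le_of_surjective _ (Submodule.mkQ_surjective _)
      _ = c := hc.symm
      _ ≤ (c * n ^ r : ℕ) := by exact_mod_cast Nat.le_mul_of_pos_right c (by positivity)
  obtain ⟨k, hk⟩ := exists_length_quotient_pow_smul_top_le_mul hQ hz
  have hlt := ENat.WithBot.add_one_le_natCast_iff.1 (hdrop.trans hdim)
  cases r with
  | zero =>
    have : Subsingleton (QuotSMulTop z N) :=
      (Module.supportDim_eq_bot_iff_subsingleton A _).1 (WithBot.lt_coe_bot.1 hlt)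
    refine ⟨0, fun n => (hk n).trans_eq ?_⟩
    rw [Module.length_eq_zero, mul_zero, zero_mul, Nat.cast_zero]
  | succ r =>
    have hQz : IsFiniteLength A
        (QuotSMulTop z N ⧸ (Q • ⊤ : Submodule A (QuotSMulTop z N))) := by
      rw [← Module.length_ne_top_iff, length_quotient_quotient_smul_top]
      exact ne_top_of_le_ne_top (Module.length_ne_top_iff.2 hQ) (length_quotient_anti le_sup_right)
    obtain ⟨c, hc⟩ := exists_length_quotient_pow_smul_top_le Q r (QuotSMulTop z N)
      (ENat.WithBot.lt_add_one_iff.1 hlt) hQz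
    refine ⟨k * c, fun n => (hk n).trans ?_⟩
    calc _ ≤ ((k * n : ℕ) : ℕ∞) * (c * n ^ r : ℕ) := mul_le_mul_right (hc n) _
      _ = (k * c * n ^ (r + 1) : ℕ) := by push_cast; ring

end Growth

section PolynomialGrowth

open Polynomial Filter

-- The Bernoulli polynomials satisfy `B_(j+1)(x + 1) - B_(j+1)(x) = (j + 1) x ^ j`.
theorem exists_forward_difference_eq {p : ℚ[X]} {k : ℕ} (hp : p.natDegree ≤ k) :
    ∃ G : ℚ[X], G.natDegree ≤ k + 1 ∧ G.coeff (k + 1) * (k + 1) = p.coeff k ∧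
      ∀ x : ℚ, G.eval (x + 1) = G.eval x + p.eval x := by
  have hdeg : ∀ j, (Polynomial.bernoulli j).natDegree ≤ j := fun j =>
    natDegree_le_iff_coeff_eq_zero.2 fun i hi => by rw [coeff_bernoulli, if_neg (by omega)]
  refine ⟨∑ j ∈ Finset.range (k + 1), C (p.coeff j / (j + 1)) * Polynomial.bernoulli (j + 1),
    natDegree_sum_le_of_forall_le _ _ fun j hj => (natDegree_C_mul_le _ _).trans ?_, ?_,
    fun x => ?_⟩
  · exact (hdeg (j + 1)).trans (by have := Finset.mem_range.1 hj; omega)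
  · have hlower : ∀ j ∈ Finset.range k,
        (C (p.coeff j / (j + 1)) * Polynomial.bernoulli (j + 1)).coeff (k + 1) = 0 := by
      intro j hj
      rw [coeff_C_mul, coeff_bernoulli, if_neg (by have := Finset.mem_range.1 hj; omega), mul_zero]
    rw [finsetSum_coeff, Finset.sum_range_succ, Finset.sum_eq_zero hlower, coeff_C_mul,
      coeff_bernoulli, if_pos le_rfl, Nat.sub_self, _root_.bernoulli_zero, Nat.choose_self]
    push_cast
    field_simp
    ring
  · rw [eval_finsetSum, eval_finsetSum, eval_eq_sum_range' (Nat.lt_succ_of_le hp),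
      ← Finset.sum_add_distrib]
    refine Finset.sum_congr rfl fun j _ => ?_
    rw [eval_C_mul, eval_C_mul, add_comm x, bernoulli_eval_one_add, Nat.add_sub_cancel]
    push_cast
    field_simp

theorem coeff_nonneg_of_eventually_eval_natCast_nonneg {p : ℚ[X]} {d : ℕ} (hp : p.natDegree ≤ d)
    (h : ∀ᶠ n : ℕ in atTop, 0 ≤ p.eval (n : ℚ)) : 0 ≤ p.coeff d := by
  by_contra! hneg
  have hdeg : p.natDegree = d := natDegree_eq_of_le_of_coeff_ne_zero hp hneg.ne
  have hlead : p.leadingCoeff < 0 := by rwa [leadingCoeff, hdeg]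
  suffices hlt : ∀ᶠ n : ℕ in atTop, p.eval (n : ℚ) < 0 by
    obtain ⟨n, hn, hn'⟩ := (h.and hlt).exists
    exact absurd hn' hn.not_gt
  rcases d.eq_zero_or_pos with rfl | hd
  · rw [eq_C_of_natDegree_eq_zero hdeg]
    exact .of_forall fun n => by rwa [eval_C]
  · exact ((tendsto_atBot_of_leadingCoeff_nonpos p (natDegree_pos_iff_degree_pos.1 (hdeg ▸ hd))
      hlead.le).comp tendsto_natCast_atTop_atTop).eventually_lt_atBot 0

theorem coeff_taylor_eq_coeff_of_natDegree_le {R : Type*} [Semiring R] {p : R[X]} {d : ℕ}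
    (hp : p.natDegree ≤ d) (r : R) : (taylor r p).coeff d = p.coeff d := by
  rcases hp.eq_or_lt with rfl | hlt
  · exact coeff_taylor_natDegree r p
  · rw [coeff_eq_zero_of_natDegree_lt hlt,
      coeff_eq_zero_of_natDegree_lt ((natDegree_taylor p r).trans_lt hlt)]

/-- Eventually `f` takes finite values given by a polynomial of degree at most `d` whose
`n ^ d`-coefficient is `e / d!`; for `f n = ℓ (M / I ^ n M)` and `d = dim M` this makes `e` the
multiplicity of `I` on `M`. -/
def HasNormalizedLeadingCoeff (f : ℕ → ℕ∞) (d : ℕ) (e : ℚ) : Prop :=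
  ∃ P : ℚ[X], P.natDegree ≤ d ∧ P.coeff d * d.factorial = e ∧
    ∀ᶠ n in atTop, ∃ a : ℕ, f n = a ∧ (a : ℚ) = P.eval (n : ℚ)

namespace HasNormalizedLeadingCoeff

theorem eventually_ne_top {f : ℕ → ℕ∞} {d : ℕ} {e : ℚ} (hf : HasNormalizedLeadingCoeff f d e) :
    ∀ᶠ n in atTop, f n ≠ ⊤ := by
  obtain ⟨_, _, _, h⟩ := hf
  filter_upwards [h] with n hn
  obtain ⟨a, ha, -⟩ := hn
  exact ha ▸ ENat.natCast_ne_top a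

theorem le_of_eventually_le {f g : ℕ → ℕ∞} {d : ℕ} {e e' : ℚ} {c K : ℕ}
    (hf : HasNormalizedLeadingCoeff f (d + 1) e) (hg : HasNormalizedLeadingCoeff g (d + 1) e')
    (hle : ∀ᶠ n in atTop, f n ≤ g (n + c) + (K * n ^ d : ℕ)) : e ≤ e' := by
  obtain ⟨P, hP, rfl, hfP⟩ := hf
  obtain ⟨Q, hQ, rfl, hgQ⟩ := hg
  have hnonneg : ∀ᶠ n : ℕ in atTop,
      0 ≤ (taylor (c : ℚ) Q + C (K : ℚ) * X ^ d - P).eval (n : ℚ) := by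
    filter_upwards [hle, hfP, (tendsto_add_atTop_nat c).eventually hgQ] with n hn hfn hgn
    obtain ⟨a, ha, haP⟩ := hfn
    obtain ⟨b, hb, hbQ⟩ := hgn
    rw [ha, hb] at hn
    have hab : (a : ℚ) ≤ b + K * n ^ d := by exact_mod_cast hn
    rw [haP, hbQ, Nat.cast_add] at hab
    simpa [taylor_eval] using hab
  have hdeg : (taylor (c : ℚ) Q + C (K : ℚ) * X ^ d - P).natDegree ≤ d + 1 := by
    refine (natDegree_sub_le_of_le (natDegree_add_le_of_degree_le ?_ ?_) hP).trans_eq (max_self _)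
    · rwa [natDegree_taylor]
    · exact (natDegree_C_mul_X_pow_le _ _).trans d.le_succ
  have hcoeff := coeff_nonneg_of_eventually_eval_natCast_nonneg hdeg hnonneg
  rw [coeff_sub, coeff_add, coeff_taylor_eq_coeff_of_natDegree_le hQ, coeff_C_mul_X_pow,
    if_neg d.succ_ne_self, add_zero, sub_nonneg] at hcoeff
  gcongr

theorem of_forward_difference {f g : ℕ → ℕ∞} {d : ℕ} {e : ℚ}
    (hg : HasNormalizedLeadingCoeff g d e) (hf : ∀ᶠ n in atTop, f n ≠ ⊤)
    (hfg : ∀ᶠ n in atTop, f (n + 1) = f n + g n) : HasNormalizedLeadingCoeff f (d + 1) e := by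
  obtain ⟨P, hP, rfl, hgP⟩ := hg
  obtain ⟨G, hG, hcoeff, hstep⟩ := exists_forward_difference_eq hP
  obtain ⟨n₀, hn₀⟩ := eventually_atTop.1 (hf.and (hfg.and hgP))
  obtain ⟨a₀, ha₀⟩ := ENat.ne_top_iff_exists.1 (hn₀ n₀ le_rfl).1
  refine ⟨G + C (a₀ - G.eval (n₀ : ℚ)), natDegree_add_le_of_degree_le hG (by simp), ?_, ?_⟩
  · rw [coeff_add, coeff_C_succ, add_zero, ← hcoeff, Nat.factorial_succ]
    push_cast
    ring
  filter_upwards [eventually_ge_atTop n₀] with n hn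
  induction n, hn using Nat.le_induction with
  | base => exact ⟨a₀, ha₀.symm, by simp⟩
  | succ n hn ih =>
    obtain ⟨a, ha, haG⟩ := ih
    obtain ⟨-, hsum, b, hb, hbP⟩ := hn₀ n hn
    refine ⟨a + b, by rw [hsum, ha, hb, Nat.cast_add], ?_⟩
    push_cast
    rw [haG, hbP, eval_add, eval_add, hstep, eval_C, eval_C]
    ring

end HasNormalizedLeadingCoeff

end PolynomialGrowth

section MultiplicityFunctions

open Filter

variable {A M : Type*} [CommRing A] [AddCommGroup M] [Module A M]

theorem coe_lenNat (h : IsFiniteLength A M) : (lenNat A M : ℕ∞) = Module.length A M := by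
  rw [lenNat, modLength, ← Module.length_eq_height]
  exact ENat.natCast_toNat (Module.length_ne_top_iff.2 h)

theorem IsHSMult.hasNormalizedLeadingCoeff {q : Ideal A} {d e : ℕ} (h : IsHSMult A M q d e) :
    HasNormalizedLeadingCoeff (fun n => Module.length A (M ⧸ (q ^ n • ⊤ : Submodule A M))) d e := by
  obtain ⟨P, hP, ⟨N, hN⟩, he⟩ := h
  refine ⟨P, hP, he.symm, eventually_atTop.2 ⟨N, fun n hn => ?_⟩⟩
  exact ⟨_, (coe_lenNat (hN n hn).1).symm, (hN n hn).2⟩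

theorem IsHSMult.isFiniteLength_quotient_smul_top {q : Ideal A} {d e : ℕ}
    (h : IsHSMult A M q d e) : IsFiniteLength A (M ⧸ (q • ⊤ : Submodule A M)) := by
  obtain ⟨_, _, ⟨N, hN⟩, _⟩ := h
  have hle : q ^ (N + 1) • (⊤ : Submodule A M) ≤ q • ⊤ :=
    Submodule.smul_mono_left (Ideal.pow_le_self N.succ_ne_zero)
  exact (hN (N + 1) N.le_succ).1.of_surjective (Submodule.factor_surjective hle)

theorem coeff_map_eval_finSuccEquiv {R : Type*} [CommSemiring R] {s k : ℕ}
    {P : MvPolynomial (Fin (s + 1)) R} (hP : P.totalDegree ≤ k) (y : Fin s → R) :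
    ((MvPolynomial.finSuccEquiv R s P).map (MvPolynomial.eval y)).coeff k =
      P.coeff (Finsupp.cons k 0) := by
  have hconst : ((MvPolynomial.finSuccEquiv R s P).coeff k).totalDegree = 0 := by
    by_cases h0 : (MvPolynomial.finSuccEquiv R s P).coeff k = 0
    · rw [h0, MvPolynomial.totalDegree_zero]
    · have := MvPolynomial.totalDegree_coeff_finSuccEquiv_add_le P k h0
      omega
  rw [Polynomial.coeff_map, MvPolynomial.totalDegree_eq_zero_iff_eq_C.1 hconst,
    MvPolynomial.eval_C, MvPolynomial.finSuccEquiv_coeff_coeff]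

theorem IsMixedMult.eventually_hasNormalizedLeadingCoeff {s : ℕ} {J : Ideal A}
    {I : Fin s → Ideal A} {k e : ℕ} (h : IsMixedMult A M J I k (fun _ => 0) e) :
    ∀ᶠ N in atTop, HasNormalizedLeadingCoeff
      (fun n => relLength (J ^ n • (∏ i, I i ^ N) • (⊤ : Submodule A M))
        (J ^ (n + 1) • (∏ i, I i ^ N) • ⊤)) k e := by
  obtain ⟨P, hP, ⟨N₀, hN₀⟩, he⟩ := h
  rw [Finset.sum_const_zero, add_zero] at hP
  filter_upwards [eventually_ge_atTop N₀] with N hN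
  refine ⟨(MvPolynomial.finSuccEquiv ℚ s P).map (MvPolynomial.eval fun _ => (N : ℚ)), ?_, ?_, ?_⟩
  · refine Polynomial.natDegree_map_le.trans ?_
    rw [MvPolynomial.natDegree_finSuccEquiv]
    exact (MvPolynomial.degreeOf_le_totalDegree P 0).trans hP
  · rw [coeff_map_eval_finSuccEquiv hP, he, Finset.prod_eq_one fun _ _ => Nat.factorial_zero,
      mul_one]
    rfl
  · filter_upwards [eventually_ge_atTop N₀] with n hn
    obtain ⟨hfin, heval⟩ := hN₀ (Fin.cons n fun _ => N) (Fin.cases hn fun _ => hN)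
    refine ⟨_, ?_, heval.trans ?_⟩
    · rw [coe_lenNat hfin, ← Submodule.mul_smul, ← Submodule.mul_smul]
      rfl
    · rw [← MvPolynomial.eval_eq_eval_mv_eval']
      congr 2
      funext i
      cases i using Fin.cases <;> rfl

end MultiplicityFunctions

section Comparison

variable {A M : Type*} [CommRing A] [AddCommGroup M] [Module A M]

theorem relLength_pow_succ_smul (J : Ideal A) (X : Submodule A M) (n : ℕ) :
    relLength X (J ^ (n + 1) • X) =
      relLength X (J ^ n • X) + relLength (J ^ n • X) (J ^ (n + 1) • X) := by
  have hle : J ^ (n + 1) • X ≤ J ^ n • X :=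
    Submodule.smul_mono_left (Ideal.pow_le_pow_right n.le_succ)
  rw [relLength_eq_add (Submodule.smul_le_right : J ^ n • X ≤ X), sup_eq_left.2 hle, add_comm]

theorem pow_add_smul_eq_pow_smul {J Q : Ideal A} {X : Submodule A M} {N : ℕ}
    (h : ∀ n, N ≤ n → J ^ (n + 1) • X = Q • J ^ n • X) (n : ℕ) :
    J ^ (n + N) • X = Q ^ n • J ^ N • X := by
  induction n with
  | zero => rw [zero_add, pow_zero, Submodule.one_smul]
  | succ n ih =>
    rw [add_right_comm, h (n + N) (Nat.le_add_left N n), ih, pow_succ', Submodule.mul_smul]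

variable [IsNoetherianRing A] [Module.Finite A M]

theorem exists_relLength_pow_smul_le (J : Ideal A) (X : Submodule A M) :
    ∃ c : ℕ, ∀ n : ℕ, relLength X (J ^ n • X) ≤
      Module.length A (M ⧸ (J ^ (n + c) • ⊤ : Submodule A M)) := by
  obtain ⟨c, hc⟩ := J.exists_pow_inf_eq_pow_smul X
  refine ⟨c, fun n => ?_⟩
  have hAR : X ⊓ J ^ (n + c) • ⊤ ≤ J ^ n • X := by
    rw [inf_comm, hc (n + c) (Nat.le_add_left c n), Nat.add_sub_cancel]
    exact Submodule.smul_mono le_rfl inf_le_right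
  calc relLength X (J ^ n • X) ≤ relLength X (J ^ (n + c) • ⊤) := relLength_anti_right hAR
    _ ≤ _ := by rw [length_quotient_eq_relLength_add X]; exact le_self_add

theorem exists_length_quotient_pow_smul_le_relLength_add [IsLocalRing A] {J Q : Ideal A}
    {X : Submodule A M} {N r : ℕ} (hred : ∀ n, N ≤ n → J ^ (n + 1) • X = Q • J ^ n • X)
    (hdim : Module.supportDim A (M ⧸ X) ≤ r)
    (hQ : IsFiniteLength A (M ⧸ (Q • ⊤ : Submodule A M))) :
    ∃ c : ℕ, ∀ n : ℕ, Module.length A (M ⧸ (Q ^ n • ⊤ : Submodule A M)) ≤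
      relLength X (J ^ (n + N) • X) + (c * n ^ r : ℕ) := by
  have hQX : IsFiniteLength A ((M ⧸ X) ⧸ (Q • ⊤ : Submodule A (M ⧸ X))) := by
    rw [← Module.length_ne_top_iff, length_quotient_quotient_smul_top]
    exact ne_top_of_le_ne_top (Module.length_ne_top_iff.2 hQ) (length_quotient_anti le_sup_right)
  obtain ⟨c, hc⟩ := exists_length_quotient_pow_smul_top_le Q r (M ⧸ X) hdim hQX
  refine ⟨c, fun n => ?_⟩
  rw [length_quotient_eq_relLength_add X, ← length_quotient_quotient_smul_top]
  refine add_le_add (relLength_anti_right (inf_le_right.trans ?_)) (hc n)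
  rw [pow_add_smul_eq_pow_smul hred]
  exact Submodule.smul_mono le_rfl le_top

end Comparison

section Dimension

open scoped Pointwise

variable {A M : Type*} [CommRing A] [AddCommGroup M] [Module A M] [Module.Finite A M]

theorem modDim_eq_supportDim : modDim A M = Module.supportDim A M :=
  (Module.supportDim_eq_ringKrullDim_quotient_annihilator A M).symm

theorem supportDim_quotient_pow_smul_top (K : Ideal A) {n : ℕ} (hn : n ≠ 0) :
    Module.supportDim A (M ⧸ (K ^ n • ⊤ : Submodule A M)) =
      Module.supportDim A (M ⧸ (K • ⊤ : Submodule A M)) := by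
  rw [Module.supportDim, Module.supportDim, Module.support_quotient, Module.support_quotient,
    PrimeSpectrum.zeroLocus_pow _ hn]

theorem not_le_of_mem_minimalPrimes_of_idealHeight_map_pos {K L p : Ideal A}
    (h : 0 < idealHeight (A ⧸ L) (K.map (Ideal.Quotient.mk L))) (hp : p ∈ L.minimalPrimes) :
    ¬ K ≤ p := by
  rw [Ideal.minimalPrimes_eq_comap] at hp
  obtain ⟨P, hP, rfl⟩ := hp
  intro hK
  let P' : PrimeSpectrum (A ⧸ L) := ⟨P, hP.1.1⟩
  have hmin : IsMin P' := fun Q hQ => hP.2 ⟨Q.2, bot_le⟩ hQ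
  have hle : idealHeight (A ⧸ L) (K.map (Ideal.Quotient.mk L)) ≤ Order.height P' :=
    iInf₂_le P' (Ideal.map_le_iff_le_comap.2 hK)
  rw [Order.height_eq_zero.2 hmin] at hle
  exact h.not_ge hle

theorem modDim_quotient_smul_top_lt [IsNoetherianRing A] {K : Ideal A} {d : ℕ}
    (hdim : modDim A M = d)
    (hK : 0 < idealHeight (A ⧸ Module.annihilator A M)
      (K.map (Ideal.Quotient.mk (Module.annihilator A M)))) :
    modDim A (M ⧸ (K • ⊤ : Submodule A M)) < d := by
  obtain ⟨z, hz, hdrop⟩ := exists_mem_supportDim_quotSMulTop_add_one_le (M := M)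
    fun p hp => not_le_of_mem_minimalPrimes_of_idealHeight_map_pos hK hp
  have hzK : z • (⊤ : Submodule A M) ≤ K • ⊤ := by
    rw [← Submodule.ideal_span_singleton_smul]
    exact Submodule.smul_mono_left ((Ideal.span_singleton_le_iff_mem _).2 hz)
  rw [modDim_eq_supportDim] at hdim ⊢
  refine (Module.supportDim_le_of_surjective _ (Submodule.factor_surjective hzK)).trans_lt ?_
  exact ENat.WithBot.add_one_le_natCast_iff.1 (hdrop.trans_eq hdim)

end Dimension

section Multiplicity

open Filter

variable {A M : Type*} [CommRing A] [IsNoetherianRing A] [AddCommGroup M] [Module A M]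
  [Module.Finite A M] {s : ℕ} {J Q : Ideal A} {I : Fin s → Ideal A} {r : ℕ}

theorem mixedMult_type_zero_eq_mult_general [IsLocalRing A] (hQJ : Q ≤ J)
    (hdim : modDim A (M ⧸ ((∏ i, I i) • ⊤ : Submodule A M)) ≤ r)
    (hred : ∃ N : ℕ, ∀ n : Fin (s + 1) → ℕ, (∀ i, N ≤ n i) →
      (J ^ (n 0 + 1) * ∏ i : Fin s, I i ^ (n i.succ + 1)) • (⊤ : Submodule A M) =
        Q • ((J ^ (n 0) * ∏ i : Fin s, I i ^ (n i.succ + 1)) • (⊤ : Submodule A M)))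
    {e₁ e₂ e₃ : ℕ} (h₁ : IsMixedMult A M J I r (fun _ => 0) e₁)
    (h₂ : IsHSMult A M J (r + 1) e₂) (h₃ : IsHSMult A M Q (r + 1) e₃) :
    e₁ = e₂ ∧ e₂ = e₃ := by
  obtain ⟨N₀, hred⟩ := hred
  obtain ⟨N, hpiece, hN⟩ := ((tendsto_add_atTop_nat 1).eventually
    h₁.eventually_hasNormalizedLeadingCoeff |>.and (eventually_ge_atTop N₀)).exists
  set X : Submodule A M := (∏ i, I i ^ (N + 1)) • ⊤ with hX
  have hredX : ∀ n, N₀ ≤ n → J ^ (n + 1) • X = Q • J ^ n • X := fun n hn => by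
    simpa only [hX, Fin.cons_zero, Fin.cons_succ, Submodule.mul_smul] using
      hred (Fin.cons n fun _ => N) (Fin.cases hn fun _ => hN)
  have hdimX : Module.supportDim A (M ⧸ X) ≤ r := by
    rwa [hX, Finset.prod_pow, supportDim_quotient_pow_smul_top _ N.succ_ne_zero,
      ← modDim_eq_supportDim]
  have h₂' := h₂.hasNormalizedLeadingCoeff
  have h₃' := h₃.hasNormalizedLeadingCoeff
  obtain ⟨c, hc⟩ := exists_relLength_pow_smul_le J X
  have hXfin : ∀ᶠ n in atTop, relLength X (J ^ n • X) ≠ ⊤ :=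
    ((tendsto_add_atTop_nat c).eventually h₂'.eventually_ne_top).mono fun n hn =>
      ne_top_of_le_ne_top hn (hc n)
  have h₁' : HasNormalizedLeadingCoeff (fun n => relLength X (J ^ n • X)) (r + 1) e₁ :=
    hpiece.of_forward_difference hXfin (.of_forall (relLength_pow_succ_smul J X))
  have h₁₂ : (e₁ : ℚ) ≤ e₂ := h₁'.le_of_eventually_le h₂' (c := c) (K := 0) <|
    .of_forall fun n => (hc n).trans le_self_add
  have h₂₃ : (e₂ : ℚ) ≤ e₃ := h₂'.le_of_eventually_le h₃' (c := 0) (K := 0) <|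
    .of_forall fun n => (length_quotient_anti
      (Submodule.smul_mono_left (Ideal.pow_right_mono hQJ n))).trans le_self_add
  obtain ⟨K, hK⟩ := exists_length_quotient_pow_smul_le_relLength_add hredX hdimX
    h₃.isFiniteLength_quotient_smul_top
  have h₃₁ : (e₃ : ℚ) ≤ e₁ := h₃'.le_of_eventually_le h₁' (.of_forall hK)
  exact ⟨by exact_mod_cast h₁₂.antisymm (h₂₃.trans h₃₁),
    by exact_mod_cast h₂₃.antisymm (h₃₁.trans h₁₂)⟩

end Multiplicity

/-- Remark 3.2.  If `ht((I + Ann_A M)/Ann_A M) > 0` and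
`R = {x 1, …, x d} ⊆ J` is a joint reduction of `(I 1, …, I s, J)` with respect to `M` of
type `(0, …, 0, d)` which is a system of parameters for `M`, then
`e_A(J^{[d]}, I 1^{[0]}, …, I s^{[0]}; M) = e_A(J; M) = e_A(R; M)`. -/
theorem mixedMult_type_zero_eq_mult
    (A : Type*) [CommRing A] [IsNoetherianRing A] [IsLocalRing A]
    [Infinite (ResidueField A)]
    (M : Type*) [AddCommGroup M] [Module A M] [Module.Finite A M]
    {s : ℕ} (J : Ideal A) (hJ : J.radical = maximalIdeal A)
    (I : Fin s → Ideal A)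
    (d : ℕ) (hd : 0 < d) (hdim : modDim A M = (d : WithBot ℕ∞))
    (hht : 0 < idealHeight (A ⧸ Module.annihilator A M)
        (Ideal.map (Ideal.Quotient.mk (Module.annihilator A M)) (∏ i, I i)))
    (x : Fin d → A) (hxJ : ∀ j, x j ∈ J)
    (hjr : ∃ N : ℕ, ∀ n : Fin (s + 1) → ℕ, (∀ i, N ≤ n i) →
      (J ^ (n 0 + 1) * ∏ i : Fin s, I i ^ (n i.succ + 1)) • (⊤ : Submodule A M) =
        Ideal.span (Set.range x) •
          ((J ^ (n 0) * ∏ i : Fin s, I i ^ (n i.succ + 1)) • (⊤ : Submodule A M)))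
    (hsop : IsSOP A M x) :
    ∀ e₁ e₂ e₃ : ℕ, IsMixedMult A M J I (d - 1) (fun _ => 0) e₁ →
      IsHSMult A M J d e₂ → IsHSMult A M (Ideal.span (Set.range x)) d e₃ →
        e₁ = e₂ ∧ e₂ = e₃ := by
  obtain ⟨r, rfl⟩ := Nat.exists_eq_add_one.2 hd
  have hQJ : Ideal.span (Set.range x) ≤ J := Ideal.span_le.2 (Set.range_subset_iff.2 hxJ)
  have hdim' := ENat.WithBot.lt_add_one_iff.1 (modDim_quotient_smul_top_lt hdim hht)
  exact fun e₁ e₂ e₃ h₁ h₂ h₃ => mixedMult_type_zero_eq_mult_general hQJ hdim' hjr h₁ h₂ h₃
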